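/- arXiv:2405.20197 — 7 statements merged into one kernel-verified Lean document; each statement's English description precedes it below -/
import Mathlib

section
/- For every integer n ≥ 1, the monoid M_n is cancellative: for all p, q, r ∈ M_n, r·p = r·q implies p = q, and p·r = q·r implies p = q. -/
namespace Malcev

/-- The alphabet `X_n`: letters `a, b, c, d` together with `A_i, B_i, C_i, D_i`
for `i` ranging over `Fin n` (so `A ⟨0, _⟩` represents `A_1`, etc.). -/
inductive Letter (n : ℕ) : Type
  | a | b | c | d
  | A (i : Fin n) | B (i : Fin n) | C (i : Fin n) | D (i : Fin n)
  deriving DecidableEq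

open FreeMonoid

/-- The defining relations `ρ_n`. -/
inductive rel (n : ℕ) : FreeMonoid (Letter n) → FreeMonoid (Letter n) → Prop
  | da (h : 0 < n) :
      rel n (of .d * of .a) (of (.A ⟨0, h⟩) * of (.C ⟨0, h⟩))
  | AD (i : ℕ) (h : i + 1 < n) :
      rel n (of (.A ⟨i, Nat.lt_of_succ_lt h⟩) * of (.D ⟨i, Nat.lt_of_succ_lt h⟩))
            (of (.A ⟨i + 1, h⟩) * of (.C ⟨i + 1, h⟩))
  | An (h : 0 < n) :
      rel n (of (.A ⟨n - 1, Nat.sub_lt h Nat.one_pos⟩) * of (.D ⟨n - 1, Nat.sub_lt h Nat.one_pos⟩))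
            (of .d * of .b)
  | cb (h : 0 < n) :
      rel n (of .c * of .b)
            (of (.B ⟨n - 1, Nat.sub_lt h Nat.one_pos⟩) * of (.D ⟨n - 1, Nat.sub_lt h Nat.one_pos⟩))
  | BC (i : ℕ) (h : i + 1 < n) :
      rel n (of (.B ⟨i + 1, h⟩) * of (.C ⟨i + 1, h⟩))
            (of (.B ⟨i, Nat.lt_of_succ_lt h⟩) * of (.D ⟨i, Nat.lt_of_succ_lt h⟩))

/-- The congruence on the free monoid generated by `ρ_n`. -/
def Mcon (n : ℕ) : Con (FreeMonoid (Letter n)) := conGen (rel n)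

/-- The presented monoid `M_n = Mon⟨X_n | ρ_n⟩`. -/
abbrev Mn (n : ℕ) : Type := (Mcon n).Quotient

/-- The quotient (natural) map `X_n* → M_n`. -/
def mk (n : ℕ) : FreeMonoid (Letter n) →* Mn n := (Mcon n).mk'

/-- The image in `M_n` of a single letter. -/
def gen {n : ℕ} (x : Letter n) : Mn n := mk n (of x)

/-- The image in `M_n` of a word (given as a list of letters). -/
def word {n : ℕ} (w : List (Letter n)) : Mn n := mk n (ofList w)

/-- The set `P_n = {c, d, A_1, …, A_n, B_1, …, B_n}`. -/
def inP {n : ℕ} : Letter n → Prop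
  | .c => True | .d => True | .A _ => True | .B _ => True | _ => False

/-- The set `Q_n = {a, b, C_1, …, C_n, D_1, …, D_n}`. -/
def inQ {n : ℕ} : Letter n → Prop
  | .a => True | .b => True | .C _ => True | .D _ => True | _ => False

/-- `inR x y` means the two-letter word `xy` belongs to
`R_n = {db, A_1C_1, …, A_nC_n, B_1D_1, …, B_nD_n}`. -/
def inR {n : ℕ} : Letter n → Letter n → Prop
  | .d, .b => True
  | .A i, .C j => i = j
  | .B i, .D j => i = j
  | _, _ => False

/-- `inL x y` means the two-letter word `xy` belongs to
`L_n = {cb, da, A_1D_1, …, A_nD_n, B_2C_2, …, B_nC_n}`. -/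
def inL {n : ℕ} : Letter n → Letter n → Prop
  | .c, .b => True
  | .d, .a => True
  | .A i, .D j => i = j
  | .B i, .C j => i = j ∧ 1 ≤ i.val
  | _, _ => False

/-- A word is in left normal form if no two consecutive letters form a word in `R_n`. -/
def LeftNormal {n : ℕ} (w : List (Letter n)) : Prop :=
  List.Chain' (fun x y => ¬ inR x y) w

/-- `v ∈ M_n` is an intersection base if some word `a_1 ⋯ a_m` (`m ≥ 2`) in left
normal form equals `v` in `M_n` and its final two letters form a word in `L_n`. -/
def IsIntersectionBase {n : ℕ} (v : Mn n) : Prop :=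
  ∃ (w : List (Letter n)) (x y : Letter n),
    LeftNormal (w ++ [x, y]) ∧ word (w ++ [x, y]) = v ∧ inL x y

/-- The principal right ideal `pM_n`. -/
def rIdeal {n : ℕ} (p : Mn n) : Set (Mn n) := {x | ∃ m, x = p * m}

/-!
Each defining relation exchanges one two-letter word for another. Every letter occurs in these words
either only as a first letter or only as a second letter, so occurrences of them in a word never
overlap; moreover an exchange changes both letters, and exchanging twice at the same place restores
the word. Hence two words are equal in `M_n` if and only if simultaneous exchanges of disjoint
factors turn one into the other. Such exchanges cannot touch a common first letter, so it can be
cancelled. The conditions on the relations are symmetric under reversal of words, so a common last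
letter can be cancelled too.
-/

section Exchange

variable {α : Type*}

/-- The relation `S` on two-letter words, encoded as pairs, is an exchange relation: it is
symmetric, transitive up to equality, related words differ in both letters, and the words it relates
never overlap. These conditions make the monoid presented by `S` cancellative. -/
structure IsExchange (S : α × α → α × α → Prop) : Prop where
  symm {w w'} : S w w' → S w' w
  eq_or_trans {w w' w''} : S w w' → S w' w'' → w = w'' ∨ S w w''
  fst_ne {w w'} : S w w' → w.1 ≠ w'.1
  snd_ne {w w'} : S w w' → w.2 ≠ w'.2
  not_overlap {w w' v v'} : S w w' → S v v' → w.2 ≠ v.1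

/-- `ExchangeEquiv S u v` says that `v` arises from `u` by simultaneously exchanging some pairwise
disjoint two-letter factors according to `S`. For an exchange relation `S` it is the congruence
generated by `S`. -/
inductive ExchangeEquiv (S : α × α → α × α → Prop) : List α → List α → Prop
  | nil : ExchangeEquiv S [] []
  | cons (x : α) {u v : List α} : ExchangeEquiv S u v → ExchangeEquiv S (x :: u) (x :: v)
  | exchange {x y x' y' : α} {u v : List α} :
      S (x, y) (x', y') → ExchangeEquiv S u v → ExchangeEquiv S (x :: y :: u) (x' :: y' :: v)

variable {S : α × α → α × α → Prop} {u v w u' v' : List α}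

theorem IsExchange.onFun_swap (hS : IsExchange S) : IsExchange (Function.onFun S Prod.swap) where
  symm h := hS.symm h
  eq_or_trans h h' := (hS.eq_or_trans h h').imp_left fun e => Prod.swap_injective e
  fst_ne h := hS.snd_ne h
  snd_ne h := hS.fst_ne h
  not_overlap h h' := (hS.not_overlap h' h).symm

namespace ExchangeEquiv

theorem refl : ∀ u : List α, ExchangeEquiv S u u
  | [] => .nil
  | x :: u => .cons x (refl u)

theorem append (h : ExchangeEquiv S u v) (h' : ExchangeEquiv S u' v') :
    ExchangeEquiv S (u ++ u') (v ++ v') := by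
  induction h with
  | nil => exact h'
  | cons x _ ih => exact .cons x ih
  | exchange hs _ ih => exact .exchange hs ih

theorem reverse (h : ExchangeEquiv S u v) :
    ExchangeEquiv (Function.onFun S Prod.swap) u.reverse v.reverse := by
  induction h with
  | nil => exact .nil
  | cons x _ ih =>
    simp only [List.reverse_cons]
    exact ih.append (refl [x])
  | exchange hs _ ih =>
    simp only [List.reverse_cons, List.append_assoc, List.singleton_append]
    exact ih.append (.exchange hs .nil)

theorem symm (hS : IsExchange S) (h : ExchangeEquiv S u v) : ExchangeEquiv S v u := by
  induction h with
  | nil => exact .nil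
  | cons x _ ih => exact .cons x ih
  | exchange hs _ ih => exact .exchange (hS.symm hs) ih

theorem of_cons (hS : IsExchange S) {x : α} (h : ExchangeEquiv S (x :: u) (x :: v)) :
    ExchangeEquiv S u v := by
  cases h with
  | cons _ h => exact h
  | exchange hs _ => exact (hS.fst_ne hs rfl).elim

theorem trans (hS : IsExchange S) (h : ExchangeEquiv S u v) (h' : ExchangeEquiv S v w) :
    ExchangeEquiv S u w := by
  induction h generalizing w with
  | nil => exact h'
  | cons x h ih =>
    cases h' with
    | cons _ h' => exact .cons x (ih h')
    | exchange hs h' =>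
      cases h with
      | cons _ _ => exact .exchange hs (of_cons hS (ih (.cons _ h')))
      | exchange ht _ => exact (hS.not_overlap hs (hS.symm ht) rfl).elim
  | exchange hs _ ih =>
    cases h' with
    | cons x h' =>
      cases h' with
      | cons _ h' => exact .exchange hs (ih h')
      | exchange ht _ => exact (hS.not_overlap (hS.symm hs) ht rfl).elim
    | exchange ht h' =>
      rcases hS.eq_or_trans hs ht with heq | hst
      · obtain ⟨rfl, rfl⟩ := Prod.mk.inj heq
        exact .cons _ (.cons _ (ih h'))
      · exact .exchange hst (ih h')

theorem of_append_left (hS : IsExchange S) (r : List α)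
    (h : ExchangeEquiv S (r ++ u) (r ++ v)) : ExchangeEquiv S u v := by
  induction r with
  | nil => exact h
  | cons x r ih => exact ih (of_cons hS h)

theorem of_append_right (hS : IsExchange S) (r : List α)
    (h : ExchangeEquiv S (u ++ r) (v ++ r)) : ExchangeEquiv S u v := by
  have hrev := h.reverse
  rw [List.reverse_append, List.reverse_append] at hrev
  have huv : ExchangeEquiv S u.reverse.reverse v.reverse.reverse :=
    (of_append_left hS.onFun_swap r.reverse hrev).reverse
  rwa [List.reverse_reverse, List.reverse_reverse] at huv

end ExchangeEquiv

/-- The congruence `ExchangeEquiv S` on the free monoid. -/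
def exchangeCon (hS : IsExchange S) : Con (FreeMonoid α) where
  r u v := ExchangeEquiv S u.toList v.toList
  iseqv := ⟨fun u => .refl u.toList, .symm hS, .trans hS⟩
  mul' := .append

/-- The two-letter word of the free monoid encoded by a pair. -/
def pairWord (w : α × α) : FreeMonoid α := of w.1 * of w.2

theorem ExchangeEquiv.conGen_map_pairWord (h : ExchangeEquiv S u v) :
    conGen (Relation.Map S pairWord pairWord) (ofList u) (ofList v) := by
  induction h with
  | nil => exact Con.refl _ _
  | cons x _ ih => exact Con.mul _ (Con.refl _ (of x)) ih
  | @exchange x y x' y' _ _ hs _ ih =>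
    have hxy : conGen (Relation.Map S pairWord pairWord) (pairWord (x, y)) (pairWord (x', y')) :=
      Con.le_conGen _ _ ⟨_, _, hs, rfl, rfl⟩
    exact Con.mul _ hxy ih

theorem conGen_map_pairWord_eq_exchangeCon (hS : IsExchange S) :
    conGen (Relation.Map S pairWord pairWord) = exchangeCon hS := by
  refine le_antisymm (Con.conGen_le.2 ?_) fun _ _ h => ExchangeEquiv.conGen_map_pairWord h
  rintro _ _ ⟨w, w', hs, rfl, rfl⟩
  exact .exchange hs .nil

theorem isCancelMul_quotient_exchangeCon (hS : IsExchange S) :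
    IsCancelMul (exchangeCon hS).Quotient where
  mul_left_cancel r p q h := by
    induction r, p using Con.induction_on₂ with | _ r p
    induction q using Con.induction_on with | _ q
    exact (Con.eq _).2 (.of_append_left hS r.toList ((Con.eq _).1 h))
  mul_right_cancel r p q h := by
    induction r, p using Con.induction_on₂ with | _ r p
    induction q using Con.induction_on with | _ q
    exact (Con.eq _).2 (.of_append_right hS r.toList ((Con.eq _).1 h))

end Exchange

theorem conGen_map_symmGen {ι M : Type*} [Mul M] (r : ι → ι → Prop) (f : ι → M) :
    conGen (Relation.Map (Relation.SymmGen r) f f) = conGen (Relation.Map r f f) := by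
  refine le_antisymm (Con.conGen_le.2 ?_) (Con.conGen_mono ?_)
  · rintro _ _ ⟨i, j, hij | hji, rfl, rfl⟩
    · exact Con.le_conGen _ _ ⟨i, j, hij, rfl, rfl⟩
    · exact Con.symm _ (Con.le_conGen _ _ ⟨j, i, hji, rfl, rfl⟩)
  · rintro _ _ ⟨i, j, hij, rfl, rfl⟩
    exact ⟨i, j, .of_rel hij, rfl, rfl⟩

theorem eq_of_symmGen_of_symmGen {ι : Type*} {r : ι → ι → Prop} (hl : Relator.LeftUnique r)
    (hr : Relator.RightUnique r) (hchain : ∀ {i j k}, r i j → ¬ r j k) {i j k : ι}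
    (hij : Relation.SymmGen r i j) (hjk : Relation.SymmGen r j k) : i = k := by
  rcases hij with hij | hji <;> rcases hjk with hjk | hkj
  · exact absurd hjk (hchain hij)
  · exact hl hij hkj
  · exact hr hji hjk
  · exact absurd hji (hchain hkj)

section Letters

variable {n : ℕ} {x y : Letter n}

theorem inL.not_inR (h : inL x y) : ¬ inR x y := by
  cases x <;> cases y <;> simp_all [inL, inR]

theorem inL.inP_and_inQ (h : inL x y) : inP x ∧ inQ y := by
  cases x <;> cases y <;> simp_all [inL, inP, inQ]

theorem inR.inP_and_inQ (h : inR x y) : inP x ∧ inQ y := by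
  cases x <;> cases y <;> simp_all [inR, inP, inQ]

theorem inP.not_inQ (h : inP x) : ¬ inQ x := by
  cases x <;> simp_all [inP, inQ]

end Letters

section DefiningRelations

variable {n : ℕ} {w w' : Letter n × Letter n}

/-- The defining relations `ρ_n` on two-letter words encoded as pairs, oriented so that they lead
from `L_n` to `R_n`. The positions of the indices are given by equations, so that two instances can
be compared by case analysis. -/
inductive Pair : Letter n × Letter n → Letter n × Letter n → Prop
  | da (i : Fin n) (h : i.val = 0) : Pair (.d, .a) (.A i, .C i)
  | AD (i j : Fin n) (h : j.val = i.val + 1) : Pair (.A i, .D i) (.A j, .C j)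
  | An (i : Fin n) (h : i.val + 1 = n) : Pair (.A i, .D i) (.d, .b)
  | cb (i : Fin n) (h : i.val + 1 = n) : Pair (.c, .b) (.B i, .D i)
  | BC (i j : Fin n) (h : j.val = i.val + 1) : Pair (.B j, .C j) (.B i, .D i)

namespace Pair

theorem rel (h : Pair w w') : rel n (pairWord w) (pairWord w') := by
  cases h with
  | da i h =>
    obtain ⟨_, hi⟩ := i
    obtain rfl := h
    exact .da hi
  | AD i j h =>
    obtain ⟨i, _⟩ := i
    obtain ⟨_, hj⟩ := j
    obtain rfl := h
    exact .AD i hj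
  | An i h =>
    obtain ⟨i, hi⟩ := i
    obtain rfl : i = n - 1 := Nat.eq_sub_of_add_eq h
    exact .An (Nat.zero_lt_of_lt hi)
  | cb i h =>
    obtain ⟨i, hi⟩ := i
    obtain rfl : i = n - 1 := Nat.eq_sub_of_add_eq h
    exact .cb (Nat.zero_lt_of_lt hi)
  | BC i j h =>
    obtain ⟨i, _⟩ := i
    obtain ⟨_, hj⟩ := j
    obtain rfl := h
    exact .BC i hj

theorem inL_left (h : Pair w w') : inL w.1 w.2 := by
  cases h <;> simp [inL, *]

theorem inR_right (h : Pair w w') : inR w'.1 w'.2 := by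
  cases h <;> simp [inR]

theorem fst_ne (h : Pair w w') : w.1 ≠ w'.1 := by
  cases h <;> grind

theorem snd_ne (h : Pair w w') : w.2 ≠ w'.2 := by
  cases h <;> simp

theorem leftUnique : Relator.LeftUnique (Pair (n := n)) := by
  intro _ _ _ h h'
  cases h <;> cases h' <;> grind

theorem rightUnique : Relator.RightUnique (Pair (n := n)) := by
  intro _ _ _ h h'
  cases h <;> cases h' <;> grind

end Pair

theorem inP_and_inQ_of_symmGen_pair (h : Relation.SymmGen Pair w w') : inP w.1 ∧ inQ w.2 :=
  h.elim (fun h => h.inL_left.inP_and_inQ) fun h => h.inR_right.inP_and_inQ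

end DefiningRelations

theorem isExchange_symmGen_pair (n : ℕ) : IsExchange (Relation.SymmGen (Pair (n := n))) where
  symm := .symm
  eq_or_trans h h' := .inl <| eq_of_symmGen_of_symmGen Pair.leftUnique Pair.rightUnique
    (fun hp hp' => hp'.inL_left.not_inR hp.inR_right) h h'
  fst_ne h := h.elim Pair.fst_ne fun h => h.fst_ne.symm
  snd_ne h := h.elim Pair.snd_ne fun h => h.snd_ne.symm
  not_overlap h h' heq := (inP_and_inQ_of_symmGen_pair h').1.not_inQ
    (heq ▸ (inP_and_inQ_of_symmGen_pair h).2)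

theorem rel_eq_map_pair (n : ℕ) : rel n = Relation.Map Pair pairWord pairWord := by
  ext u v
  constructor
  · rintro (h | ⟨i, h⟩ | h | h | ⟨i, h⟩)
    · exact ⟨_, _, .da _ rfl, rfl, rfl⟩
    · exact ⟨_, _, .AD _ _ rfl, rfl, rfl⟩
    · exact ⟨_, _, .An _ (Nat.sub_add_cancel h), rfl, rfl⟩
    · exact ⟨_, _, .cb _ (Nat.sub_add_cancel h), rfl, rfl⟩
    · exact ⟨_, _, .BC _ _ rfl, rfl, rfl⟩
  · rintro ⟨w, w', h, rfl, rfl⟩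
    exact h.rel

theorem Mcon_eq_exchangeCon (n : ℕ) : Mcon n = exchangeCon (isExchange_symmGen_pair n) := by
  rw [Mcon, rel_eq_map_pair, ← conGen_map_symmGen, conGen_map_pairWord_eq_exchangeCon]

/-- For every `n ≥ 1`, the monoid `M_n` is cancellative. -/
theorem Mn_cancellative (n : ℕ) (hn : 1 ≤ n) :
    ∀ p q r : Mn n, (r * p = r * q → p = q) ∧ (p * r = q * r → p = q) := by
  intro p q r
  have : IsCancelMul (Mcon n).Quotient := by
    rw [Mcon_eq_exchangeCon]
    exact isCancelMul_quotient_exchangeCon _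
  exact ⟨mul_left_cancel, mul_right_cancel⟩

end Malcev
end

section
/- For every integer n ≥ 1, the monoid M_n is not group-embeddable: for every group G and every monoid homomorphism φ : M_n → G, φ is not injective. -/
namespace Malcev

open FreeMonoid

/-!
In a group, once `p x = q y`, the equations `r p⁻¹ = s q⁻¹` and `r x = s y` are equivalent. Hence
the relations give `c d⁻¹ = B_n A_n⁻¹ = ⋯ = B_1 A_1⁻¹` in every group receiving `M_n`, and
`d a = A_1 C_1` then forces `c a = B_1 C_1`. In `M_n` itself the word `ca` is alone in its class,
since both sides of each defining relation contain a letter other than `a` and `c`.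
-/

theorem div_eq_div_iff_mul_eq_mul_of_mul_eq_mul {G : Type*} [Group G] {p q r s x y : G}
    (h : p * x = q * y) : r / p = s / q ↔ r * x = s * y := by
  rw [← mul_div_mul_right_eq_div r p x, ← mul_div_mul_right_eq_div s q y, h, div_left_inj]

theorem map_gen_mul_map_gen_of_rel {n : ℕ} {M : Type*} [MulOneClass M] (φ : Mn n →* M)
    {x y z w : Letter n} (h : rel n (of x * of y) (of z * of w)) :
    φ (gen x) * φ (gen y) = φ (gen z) * φ (gen w) := by
  have hmk : mk n (of x * of y) = mk n (of z * of w) := (Mcon n).eq.2 (ConGen.Rel.of _ _ h)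
  simpa only [gen, map_mul] using congrArg φ hmk

/-- The homomorphism to `(ℕ, ·)` with value `1` on the words in `a` and `c` only and `0` on all
others, used to tell `ca` from the words containing another letter. -/
def indicatorAC (n : ℕ) : Mn n →* ℕ :=
  (Mcon n).lift
    (FreeMonoid.lift fun
      | .a | .c => 1
      | _ => 0)
    (Con.conGen_le.2 fun _ _ h => by cases h <;> simp [Con.ker_rel])

theorem gen_c_mul_gen_a_ne_gen_B_mul {n : ℕ} (i : Fin n) (m : Mn n) :
    gen .c * gen .a ≠ gen (.B i) * m := by
  intro h
  have hB : indicatorAC n (gen (.B i)) = 0 := rfl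
  have hca : indicatorAC n (gen .c * gen .a) = 1 := rfl
  rw [h, map_mul, hB, zero_mul] at hca
  exact zero_ne_one hca

section MapToGroup

variable {n : ℕ} {G : Type*} [Group G] (φ : Mn n →* G)

theorem map_B_div_map_A (i : Fin n) :
    φ (gen (.B i)) / φ (gen (.A i)) = φ (gen .c) / φ (gen .d) := by
  cases n with
  | zero => exact i.elim0
  | succ n =>
    induction i using Fin.reverseInduction with
    | last =>
      exact (div_eq_div_iff_mul_eq_mul_of_mul_eq_mul
        (map_gen_mul_map_gen_of_rel φ (.An n.succ_pos))).2
        (map_gen_mul_map_gen_of_rel φ (.cb n.succ_pos)).symm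
    | cast i ih =>
      have hi : (i : ℕ) + 1 < n + 1 := i.succ.isLt
      exact ((div_eq_div_iff_mul_eq_mul_of_mul_eq_mul
        (map_gen_mul_map_gen_of_rel φ (.AD i hi))).2
        (map_gen_mul_map_gen_of_rel φ (.BC i hi)).symm).trans ih

theorem map_gen_c_mul_gen_a (hn : 0 < n) :
    φ (gen .c * gen .a) = φ (gen (.B ⟨0, hn⟩) * gen (.C ⟨0, hn⟩)) := by
  rw [map_mul, map_mul]
  exact (div_eq_div_iff_mul_eq_mul_of_mul_eq_mul
    (map_gen_mul_map_gen_of_rel φ (.da hn))).1 (map_B_div_map_A φ ⟨0, hn⟩).symm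

end MapToGroup

/-- For every `n ≥ 1`, `M_n` is not group-embeddable. -/
theorem Mn_not_group_embeddable (n : ℕ) (hn : 1 ≤ n)
    (G : Type*) [Group G] (φ : Mn n →* G) : ¬ Function.Injective φ := by
  intro hφ
  exact gen_c_mul_gen_a_ne_gen_B_mul ⟨0, hn⟩ _ (hφ (map_gen_c_mul_gen_a φ hn))

end Malcev
end

section
/- Let n ≥ 1 and let w, w' be words over X_n that are equal in M_n. Then: (1) w and w' have the same length; (2) for each index i, the i-th letter of w lies in P_n if and only if the i-th letter of w' lies in P_n; (3) for each index i, the i-th letter of w lies in Q_n if and only if the i-th letter of w' lies in Q_n. -/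
namespace Malcev

open FreeMonoid

theorem inQ_iff_not_inP {n : ℕ} (x : Letter n) : inQ x ↔ ¬ inP x := by
  cases x <;> simp only [inQ, inP, not_true_eq_false, not_false_eq_true]

theorem rel.map_inP_eq {n : ℕ} {u v : FreeMonoid (Letter n)} (h : rel n u v) :
    FreeMonoid.map inP u = FreeMonoid.map inP v := by
  -- Both sides of every relation are a letter of `P_n` followed by a letter of `Q_n`.
  cases h <;> rfl

/-- The pattern of an element of `M_n`: the word over `Prop` recording, letter by letter, which
letters of a representative lie in `P_n`. That it is well defined on `M_n` shows that the length of
a word and the positions of its letters in `P_n` depend only on its image. -/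
def pattern (n : ℕ) : Mn n →* FreeMonoid Prop :=
  (Mcon n).lift (FreeMonoid.map inP) (Con.conGen_le.2 fun _ _ => rel.map_inP_eq)

theorem pattern_word {n : ℕ} (w : List (Letter n)) :
    pattern n (word w) = ofList (w.map inP) :=
  rfl

theorem map_inP_eq_of_word_eq {n : ℕ} {w w' : List (Letter n)} (h : word w = word w') :
    w.map inP = w'.map inP := by
  simpa only [pattern_word, EmbeddingLike.apply_eq_iff_eq] using congrArg (pattern n) h

/-- words equal in `M_n` have the same length and matching
`P_n`/`Q_n` positions. -/
theorem Mn_length_and_PQ_invariant (n : ℕ) (hn : 1 ≤ n)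
    (w w' : List (Letter n)) (h : word w = word w') :
    w.length = w'.length ∧
    (∀ (i : ℕ) (h1 : i < w.length) (h2 : i < w'.length),
      (inP (w[i]'h1) ↔ inP (w'[i]'h2)) ∧ (inQ (w[i]'h1) ↔ inQ (w'[i]'h2))) := by
  have hmap : w.map inP = w'.map inP := map_inP_eq_of_word_eq h
  have hlength : w.length = w'.length := by
    simpa only [List.length_map] using congrArg List.length hmap
  refine ⟨hlength, fun i h1 h2 => ?_⟩
  have hP : inP w[i] ↔ inP w'[i] := by
    have hi : (w.map inP)[i]? = (w'.map inP)[i]? := by rw [hmap]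
    simpa only [List.getElem?_map, List.getElem?_eq_getElem, h1, h2, Option.map_some,
      Option.some.injEq, eq_iff_iff] using hi
  exact ⟨hP, by rw [inQ_iff_not_inP, inQ_iff_not_inP, hP]⟩

end Malcev
end

section
/- For every integer n ≥ 1 and every word w over X_n, there exists a unique word w' in left normal form such that w and w' are equal in M_n. -/
namespace Malcev

open FreeMonoid

/-!
Read from right to left, the relations of `ρ_n` contract each word of `R_n` to a two-letter word.
Let each letter act on words by putting itself in front and contracting the first two letters once
if they form a word of `R_n`. Neither a word of `R_n` nor its contraction ends in a letter that
starts a word of `R_n`, and no contraction lies in `R_n`. Hence left normal forms are preserved and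
the two sides of each relation act in the same way, so `M_n` acts on words. The action of an element
of `M_n` on the empty word gives its left normal form.
-/

section Contraction

variable {α : Type*} {f : α → α → Option (α × α)}

/-- The contraction rules encoded by `f`, as a relation between two-letter words:
`f x y = some (p, q)` stands for the rule that contracts `xy` to `pq`, and `f x y = none` says that
no rule applies to `xy`. -/
inductive Contracts (f : α → α → Option (α × α)) : FreeMonoid α → FreeMonoid α → Prop
  | of_eq_some {x y p q : α} (h : f x y = some (p, q)) : Contracts f (of x * of y) (of p * of q)

/-- A word is reduced if none of its two-letter factors can be contracted. -/
def IsReduced (f : α → α → Option (α × α)) (w : List α) : Prop :=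
  w.IsChain fun x y => f x y = none

/-- Overlap-freeness of a system of contractions: the words it produces are reduced, and the last
letter of a contracted word, before or after the contraction, starts no contractible word. -/
structure OverlapFree (f : α → α → Option (α × α)) : Prop where
  right_eq_none {x y p q : α} (h : f x y = some (p, q)) (z : α) : f y z = none
  snd_eq_none {x y p q : α} (h : f x y = some (p, q)) (z : α) : f q z = none
  fst_snd_eq_none {x y p q : α} (h : f x y = some (p, q)) : f p q = none

/-- Left multiplication by a letter on reduced words. It is defined on all words, with at most one
contraction, at the front. -/
def prepend (f : α → α → Option (α × α)) (x : α) : List α → List α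
  | [] => [x]
  | y :: l =>
    match f x y with
    | some (p, q) => p :: q :: l
    | none => x :: y :: l

/-- The action of the free monoid on words in which each letter acts by `prepend`. -/
def prependHom (f : α → α → Option (α × α)) : FreeMonoid α →* Function.End (List α) :=
  FreeMonoid.lift (prepend f)

/-- The reduced form of a word, obtained by contracting from right to left. -/
def reduce (f : α → α → Option (α × α)) (w : FreeMonoid α) : List α :=
  prependHom f w []

theorem prepend_of_forall_eq_none {x : α} (h : ∀ z, f x z = none) (l : List α) :
    prepend f x l = x :: l := by
  cases l with
  | nil => rfl
  | cons y l => rw [prepend, h]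

theorem prepend_cons_of_eq_none {x y : α} (h : f x y = none) (l : List α) :
    prepend f x (y :: l) = x :: y :: l := by
  rw [prepend, h]

theorem prepend_cons_of_eq_some {x y p q : α} (h : f x y = some (p, q)) (l : List α) :
    prepend f x (y :: l) = p :: q :: l := by
  rw [prepend, h]

theorem prependHom_of (x : α) : prependHom f (of x) = prepend f x :=
  lift_eval_of (M := Function.End (List α)) (prepend f) x

theorem reduce_cons (x : α) (l : List α) :
    reduce f (ofList (x :: l)) = prepend f x (reduce f (ofList l)) := by
  rw [reduce, ofList_cons, map_mul, prependHom_of]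
  rfl

theorem IsReduced.prepend (hf : OverlapFree f) (x : α) {l : List α} (hl : IsReduced f l) :
    IsReduced f (prepend f x l) := by
  cases l with
  | nil => exact .singleton x
  | cons y l =>
    cases h : f x y with
    | none =>
      rw [prepend_cons_of_eq_none h]
      exact .cons_cons h hl
    | some pq =>
      rw [prepend_cons_of_eq_some h]
      exact .cons_cons (hf.fst_snd_eq_none h)
        (List.isChain_cons.2 ⟨fun z _ => hf.snd_eq_none h z, hl.tail⟩)

theorem isReduced_reduce (hf : OverlapFree f) (l : List α) :
    IsReduced f (reduce f (ofList l)) := by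
  induction l with
  | nil => exact .nil
  | cons x l ih =>
    rw [reduce_cons]
    exact ih.prepend hf x

theorem IsReduced.reduce_eq {l : List α} (hl : IsReduced f l) : reduce f (ofList l) = l := by
  induction l with
  | nil => rfl
  | cons x l ih =>
    rw [reduce_cons, ih hl.tail]
    cases l with
    | nil => rfl
    | cons y l => exact prepend_cons_of_eq_none (List.isChain_cons_cons.1 hl).1 l

theorem conGen_prepend (x : α) (l : List α) :
    conGen (Contracts f) (of x * ofList l) (ofList (prepend f x l)) := by
  cases l with
  | nil => exact (conGen _).refl _
  | cons y l =>
    cases h : f x y with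
    | none =>
      rw [prepend_cons_of_eq_none h]
      exact (conGen _).refl _
    | some pq =>
      rw [prepend_cons_of_eq_some h]
      exact (conGen _).mul (.of _ _ (Contracts.of_eq_some h)) ((conGen _).refl (ofList l))

theorem conGen_reduce (l : List α) :
    conGen (Contracts f) (ofList l) (ofList (reduce f (ofList l))) := by
  induction l with
  | nil => exact (conGen _).refl _
  | cons x l ih =>
    rw [reduce_cons]
    exact (conGen _).trans ((conGen _).mul ((conGen _).refl (of x)) ih) (conGen_prepend x _)

theorem prependHom_eq_of_contracts (hf : OverlapFree f) {u v : FreeMonoid α}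
    (h : Contracts f u v) : prependHom f u = prependHom f v := by
  obtain @⟨x, y, p, q, h⟩ := h
  funext l
  calc prepend f x (prepend f y l)
    _ = p :: q :: l := by
      rw [prepend_of_forall_eq_none (hf.right_eq_none h), prepend_cons_of_eq_some h]
    _ = prepend f p (prepend f q l) := by
      rw [prepend_of_forall_eq_none (hf.snd_eq_none h),
        prepend_cons_of_eq_none (hf.fst_snd_eq_none h)]

theorem reduce_eq_of_conGen (hf : OverlapFree f) {u v : FreeMonoid α}
    (h : conGen (Contracts f) u v) : reduce f u = reduce f v := by
  have hle : conGen (Contracts f) ≤ Con.ker (prependHom f) :=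
    Con.conGen_le.2 fun _ _ h => prependHom_eq_of_contracts hf h
  exact congrFun (hle h) []

theorem OverlapFree.existsUnique_isReduced (hf : OverlapFree f) (w : List α) :
    ∃! w', IsReduced f w' ∧ conGen (Contracts f) (ofList w) (ofList w') := by
  refine ⟨reduce f (ofList w), ⟨isReduced_reduce hf w, conGen_reduce w⟩, ?_⟩
  rintro v ⟨hv, h⟩
  rw [reduce_eq_of_conGen hf h, hv.reduce_eq]

end Contraction

section LeftContraction

variable {n : ℕ}

/-- The relations `ρ_n` as a system of contractions, oriented so that the contractible two-letter
words are those of `R_n`; this orientation is opposite to that of `rel`. -/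
def leftContract : Letter n → Letter n → Option (Letter n × Letter n)
  | .d, .b =>
    if h : 0 < n then
      some (.A ⟨n - 1, Nat.sub_lt h Nat.one_pos⟩, .D ⟨n - 1, Nat.sub_lt h Nat.one_pos⟩)
    else none
  | .A ⟨0, _⟩, .C ⟨0, _⟩ => some (.d, .a)
  | .A ⟨i + 1, h⟩, .C ⟨j + 1, _⟩ =>
    if i = j then
      some (.A ⟨i, Nat.lt_of_succ_lt h⟩, .D ⟨i, Nat.lt_of_succ_lt h⟩)
    else none
  | .B i, .D j =>
    if i = j then
      if h : i.val + 1 < n then some (.B ⟨i + 1, h⟩, .C ⟨i + 1, h⟩) else some (.c, .b)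
    else none
  | _, _ => none

theorem leftContract_eq_none_iff (hn : 1 ≤ n) {x y : Letter n} :
    leftContract x y = none ↔ ¬ inR x y := by
  cases x <;> cases y
  case A.C i j =>
    rcases i with ⟨_ | i, _⟩ <;> rcases j with ⟨_ | j, _⟩ <;> simp [leftContract, inR]
  all_goals grind [leftContract, inR]

theorem leftContract_eq_none_of_inQ {x : Letter n} (hx : inQ x) (y : Letter n) :
    leftContract x y = none := by
  cases x <;> simp_all [leftContract, inQ]

theorem inQ_right_of_leftContract {x y p q : Letter n} (h : leftContract x y = some (p, q)) :
    inQ y := by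
  cases y <;> simp_all [leftContract, inQ]

theorem inL_of_leftContract {x y p q : Letter n} (h : leftContract x y = some (p, q)) :
    inL p q := by
  fun_cases leftContract x y <;> grind [leftContract, inL]

theorem inQ_right_of_inL {x y : Letter n} (h : inL x y) : inQ y := by
  cases x <;> cases y <;> simp_all [inL, inQ]

theorem leftContract_eq_none_of_inL {x y : Letter n} (h : inL x y) : leftContract x y = none := by
  cases x <;> cases y <;> simp_all [inL, leftContract]

theorem overlapFree_leftContract : OverlapFree (leftContract (n := n)) where
  right_eq_none h := leftContract_eq_none_of_inQ (inQ_right_of_leftContract h)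
  snd_eq_none h := leftContract_eq_none_of_inQ (inQ_right_of_inL (inL_of_leftContract h))
  fst_snd_eq_none h := leftContract_eq_none_of_inL (inL_of_leftContract h)

theorem contracts_leftContract_of_rel {u v : FreeMonoid (Letter n)} (h : rel n u v) :
    Contracts leftContract v u := by
  cases h with
  | da h => exact .of_eq_some rfl
  | AD i h => exact .of_eq_some (if_pos rfl)
  | An h => exact .of_eq_some (dif_pos h)
  | cb h => exact .of_eq_some (by simp [leftContract, Nat.sub_add_cancel h])
  | BC i h => exact .of_eq_some (by simp [leftContract, h])

theorem rel_of_leftContract {x y p q : Letter n} (h : leftContract x y = some (p, q)) :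
    rel n (of p * of q) (of x * of y) := by
  cases x <;> cases y
  case d.b =>
    rw [leftContract] at h
    split_ifs at h with hn
    cases h
    exact .An hn
  case A.C i j =>
    rcases i with ⟨_ | i, hi⟩ <;> rcases j with ⟨_ | j, hj⟩ <;>
      simp only [leftContract, reduceCtorEq] at h
    · cases h
      exact .da hi
    · split_ifs at h with hij
      cases h
      subst hij
      exact .AD i hi
  case B.D i j =>
    rw [leftContract] at h
    split_ifs at h with hij hi
    · cases h
      subst hij
      exact .BC i hi
    · cases h
      subst hij
      have i_eq_last : i = ⟨n - 1, Nat.sub_lt i.pos Nat.one_pos⟩ := Fin.ext (by lia)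
      rw [i_eq_last]
      exact .cb i.pos
  all_goals simp [leftContract] at h

theorem rel_iff_contracts_leftContract {u v : FreeMonoid (Letter n)} :
    rel n u v ↔ Contracts leftContract v u := by
  refine ⟨contracts_leftContract_of_rel, ?_⟩
  rintro ⟨h⟩
  exact rel_of_leftContract h

theorem Mcon_eq_conGen_contracts : Mcon n = conGen (Contracts leftContract) :=
  le_antisymm
    (Con.conGen_le.2 fun _ _ h => (conGen _).symm (.of _ _ (rel_iff_contracts_leftContract.1 h)))
    (Con.conGen_le.2 fun _ _ h => (Mcon n).symm (.of _ _ (rel_iff_contracts_leftContract.2 h)))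

theorem word_eq_word_iff {w w' : List (Letter n)} :
    word w = word w' ↔ conGen (Contracts leftContract) (ofList w) (ofList w') := by
  rw [← Mcon_eq_conGen_contracts]
  exact Con.eq _

theorem leftNormal_iff_isReduced (hn : 1 ≤ n) {w : List (Letter n)} :
    LeftNormal w ↔ IsReduced leftContract w := by
  simp only [IsReduced, leftContract_eq_none_iff hn]
  rfl

end LeftContraction

/-- every word has a unique left normal form. -/
theorem Mn_left_normal_form (n : ℕ) (hn : 1 ≤ n) (w : List (Letter n)) :
    ∃! w' : List (Letter n), LeftNormal w' ∧ word w = word w' := by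
  simp only [leftNormal_iff_isReduced hn, word_eq_word_iff]
  exact overlapFree_leftContract.existsUnique_isReduced w

end Malcev
end

section
/- Let n ≥ 1 and let v ∈ M_n. There exist u_1, u_2 ∈ M_n and letters x_1, x_2 ∈ X_n with (u_1, x_1) ≠ (u_2, x_2), u_1·x_1 = v and u_2·x_2 = v (i.e. v has in-degree at least 2 in the Cayley graph of M_n with respect to X_n) if and only if v is an intersection base. -/
/-!
Read every relation from right to left, as a rule replacing a word of `R_n` by a word of `L_n`.
Words of both kinds start with a letter of `P_n` and end with a letter outside `P_n`, so left
sides of rules never overlap and a replacement never creates a new one. Hence letting each letter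
act on words by prepending it and rewriting the first two letters if they form a left side respects
the relations, which makes normal forms unique. Appending a letter to a normal form either gives a
normal form, which determines both the prefix and the letter, or completes a left side, whose
replacement gives a normal form ending with a word of `L_n`. Conversely, undoing the replacement
of such a final word gives a second way to reach the same element.
-/

namespace Malcev

open FreeMonoid

/-- A length-preserving rewriting system on two-letter words: each word `x y` with `IsRedex x y`
is replaced by `contract x y`, whose value on other pairs is irrelevant. The letters satisfying
`IsHead` are those allowed to start a side of a rule; the others are those allowed to end one. -/
structure PairRewriting (α : Type*) where
  IsHead : α → Prop
  IsRedex : α → α → Prop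
  contract : α → α → α × α
  isHead_of_isRedex {x y : α} : IsRedex x y → IsHead x
  not_isHead_of_isRedex {x y : α} : IsRedex x y → ¬ IsHead y
  isHead_contract_fst {x y : α} : IsRedex x y → IsHead (contract x y).1
  not_isHead_contract_snd {x y : α} : IsRedex x y → ¬ IsHead (contract x y).2
  not_isRedex_contract {x y : α} :
    IsRedex x y → ¬ IsRedex (contract x y).1 (contract x y).2

namespace PairRewriting

variable {α M : Type*} [Monoid M] (S : PairRewriting α)

/-- The rules of the system, as a relation on words from left side to right side. -/
inductive Rule : FreeMonoid α → FreeMonoid α → Prop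
  | of_isRedex {x y : α} (h : S.IsRedex x y) :
      Rule (of x * of y) (of (S.contract x y).1 * of (S.contract x y).2)

/-- The congruence on words generated by the rules. -/
def con : Con (FreeMonoid α) := conGen S.Rule

/-- The words containing no redex. -/
def IsNormal (w : List α) : Prop := w.IsChain fun x y => ¬ S.IsRedex x y

/-- The two-letter words that are right sides of rules. -/
def IsContractum (z t : α) : Prop := ∃ x y, S.IsRedex x y ∧ S.contract x y = (z, t)

/-- The elements of `M` represented, through `π`, by a normal word ending in a right side of a
rule: the intersection bases of the paper. -/
def IsBase (π : FreeMonoid α →* M) (v : M) : Prop :=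
  ∃ (w : List α) (x y : α),
    S.IsNormal (w ++ [x, y]) ∧ π (ofList (w ++ [x, y])) = v ∧ S.IsContractum x y

open Classical in
/-- Prepends a letter to a word and contracts the redex this may create at the front. -/
noncomputable def reduceCons (x : α) : List α → List α
  | [] => [x]
  | y :: w =>
    if S.IsRedex x y then (S.contract x y).1 :: (S.contract x y).2 :: w else x :: y :: w

/-- The action of words on words by successive reduced prepending. -/
noncomputable def reduceHom : FreeMonoid α →* Function.End (List α) :=
  FreeMonoid.lift S.reduceCons

variable {S}

theorem reduceHom_of_apply (x : α) (w : List α) : S.reduceHom (of x) w = S.reduceCons x w :=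
  rfl

theorem reduceHom_of_mul_apply (x : α) (u : FreeMonoid α) (w : List α) :
    S.reduceHom (of x * u) w = S.reduceCons x (S.reduceHom u w) :=
  congrFun (map_mul S.reduceHom (of x) u) w

theorem reduceCons_of_isRedex {x y : α} (h : S.IsRedex x y) (w : List α) :
    S.reduceCons x (y :: w) = (S.contract x y).1 :: (S.contract x y).2 :: w :=
  if_pos h

theorem reduceCons_of_not_isRedex {x y : α} (h : ¬ S.IsRedex x y) (w : List α) :
    S.reduceCons x (y :: w) = x :: y :: w :=
  if_neg h

theorem reduceCons_of_not_isHead {x : α} (h : ¬ S.IsHead x) : ∀ w, S.reduceCons x w = x :: w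
  | [] => rfl
  | _ :: w => reduceCons_of_not_isRedex (fun h' => h (S.isHead_of_isRedex h')) w

theorem con_le_ker_reduceHom : S.con ≤ Con.ker S.reduceHom := by
  refine Con.conGen_le.2 fun _ _ ⟨h⟩ => ?_
  rw [Con.ker_rel]
  funext w
  rw [reduceHom_of_mul_apply, reduceHom_of_mul_apply, reduceHom_of_apply, reduceHom_of_apply,
    reduceCons_of_not_isHead (S.not_isHead_of_isRedex h), reduceCons_of_isRedex h,
    reduceCons_of_not_isHead (S.not_isHead_contract_snd h),
    reduceCons_of_not_isRedex (S.not_isRedex_contract h)]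

namespace IsNormal

theorem reduceHom_apply_nil : ∀ {w : List α}, S.IsNormal w → S.reduceHom (ofList w) [] = w
  | [], _ => rfl
  | [_], _ => rfl
  | x :: y :: w, h => by
    obtain ⟨hxy, hw⟩ := List.isChain_cons_cons.1 h
    rw [ofList_cons, reduceHom_of_mul_apply, reduceHom_apply_nil hw,
      reduceCons_of_not_isRedex hxy]

theorem eq_of_map_eq {π : FreeMonoid α →* M} (hπ : Con.ker π ≤ S.con) {u w : List α}
    (hu : S.IsNormal u) (hw : S.IsNormal w) (h : π (ofList u) = π (ofList w)) : u = w := by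
  have hact : S.reduceHom (ofList u) = S.reduceHom (ofList w) := con_le_ker_reduceHom (hπ h)
  rw [← hu.reduceHom_apply_nil, hact, hw.reduceHom_apply_nil]

theorem append_singleton_of_isHead {w : List α} (hw : S.IsNormal w) {x : α} (hx : S.IsHead x) :
    S.IsNormal (w ++ [x]) := by
  refine List.isChain_append.2 ⟨hw, List.isChain_singleton x, fun y _ z hz => ?_⟩
  obtain rfl : x = z := by simpa using hz
  exact fun h => S.not_isHead_of_isRedex h hx

theorem append_pair {w : List α} {x y : α} (hw : S.IsNormal (w ++ [x])) (h : ¬ S.IsRedex x y) :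
    S.IsNormal (w ++ [x, y]) :=
  List.isChain_append_cons_cons.2 ⟨hw, h, List.isChain_singleton y⟩

theorem append_contract {w : List α} (hw : S.IsNormal w) {x y : α} (h : S.IsRedex x y) :
    S.IsNormal (w ++ [(S.contract x y).1, (S.contract x y).2]) :=
  (hw.append_singleton_of_isHead (S.isHead_contract_fst h)).append_pair (S.not_isRedex_contract h)

end IsNormal

theorem map_append_contract {π : FreeMonoid α →* M} (hπ : S.con ≤ Con.ker π) (w : List α)
    {x y : α} (h : S.IsRedex x y) :
    π (ofList (w ++ [(S.contract x y).1, (S.contract x y).2])) = π (ofList (w ++ [x, y])) := by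
  have hrule : π (ofList [x, y]) = π (ofList [(S.contract x y).1, (S.contract x y).2]) :=
    hπ (ConGen.Rel.of _ _ (.of_isRedex h))
  rw [ofList_append, ofList_append, map_mul, map_mul, hrule]

theorem map_mul_map_of (π : FreeMonoid α →* M) (w : List α) (x : α) :
    π (ofList w) * π (of x) = π (ofList (w ++ [x])) := by
  rw [ofList_append, map_mul, ofList_singleton]

theorem IsNormal.append_singleton_or_isBase {π : FreeMonoid α →* M} (hπ : S.con ≤ Con.ker π)
    {w : List α} (hw : S.IsNormal w) (x : α) :
    S.IsNormal (w ++ [x]) ∨ S.IsBase π (π (ofList w) * π (of x)) := by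
  rcases List.eq_nil_or_concat' w with rfl | ⟨u, y, rfl⟩
  · exact .inl (List.isChain_singleton x)
  rw [map_mul_map_of, List.append_assoc]
  by_cases h : S.IsRedex y x
  · have hu : S.IsNormal u := (List.isChain_append.1 hw).1
    exact .inr ⟨u, _, _, hu.append_contract h, map_append_contract hπ u h, y, x, h, rfl⟩
  · exact .inl (hw.append_pair h)

theorem exists_isNormal_map_eq {π : FreeMonoid α →* M} (hπ : S.con ≤ Con.ker π)
    (hsurj : Function.Surjective π) (v : M) : ∃ w, S.IsNormal w ∧ π (ofList w) = v := by
  obtain ⟨u, rfl⟩ := hsurj v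
  obtain ⟨w, rfl⟩ := ofList.surjective u
  induction w using List.reverseRecOn with
  | nil => exact ⟨[], List.isChain_nil, rfl⟩
  | append_singleton w x ih =>
    obtain ⟨u, hu, huw⟩ := ih
    rw [← map_mul_map_of, ← huw]
    rcases hu.append_singleton_or_isBase hπ x with h | ⟨u', y, z, h, hmap, -⟩
    · exact ⟨_, h, (map_mul_map_of π u x).symm⟩
    · exact ⟨_, h, hmap⟩

theorem isBase_of_map_mul_eq {π : FreeMonoid α →* M} (hker : Con.ker π = S.con)
    (hsurj : Function.Surjective π) {u₁ u₂ : M} {x₁ x₂ : α} (hne : (u₁, x₁) ≠ (u₂, x₂))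
    (h : u₁ * π (of x₁) = u₂ * π (of x₂)) : S.IsBase π (u₁ * π (of x₁)) := by
  obtain ⟨w₁, hw₁, rfl⟩ := exists_isNormal_map_eq hker.ge hsurj u₁
  obtain ⟨w₂, hw₂, rfl⟩ := exists_isNormal_map_eq hker.ge hsurj u₂
  rcases hw₁.append_singleton_or_isBase hker.ge x₁ with h₁ | h₁
  · rcases hw₂.append_singleton_or_isBase hker.ge x₂ with h₂ | h₂
    · rw [map_mul_map_of, map_mul_map_of] at h
      obtain ⟨rfl, hx⟩ := List.append_inj' (h₁.eq_of_map_eq hker.le h₂ h) rfl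
      obtain rfl := List.singleton_injective hx
      exact absurd rfl hne
    · rwa [h]
  · exact h₁

theorem IsBase.exists_ne {π : FreeMonoid α →* M} (hker : Con.ker π = S.con) {v : M}
    (hv : S.IsBase π v) : ∃ (u₁ u₂ : M) (x₁ x₂ : α),
      (u₁, x₁) ≠ (u₂, x₂) ∧ u₁ * π (of x₁) = v ∧ u₂ * π (of x₂) = v := by
  obtain ⟨w, z, t, hnormal, rfl, x, y, hxy, hzt⟩ := hv
  obtain ⟨rfl, rfl⟩ := Prod.ext_iff.1 hzt
  have hw : S.IsNormal w := (List.isChain_append.1 hnormal).1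
  refine ⟨π (ofList (w ++ [x])), π (ofList (w ++ [(S.contract x y).1])), y, (S.contract x y).2,
    fun heq => ?_, ?_, ?_⟩
  · obtain ⟨hprefix, hlast⟩ := Prod.ext_iff.1 heq
    have hwords : w ++ [x] = w ++ [(S.contract x y).1] :=
      (hw.append_singleton_of_isHead (S.isHead_of_isRedex hxy)).eq_of_map_eq hker.le
        (hw.append_singleton_of_isHead (S.isHead_contract_fst hxy)) hprefix
    have hfirst : x = (S.contract x y).1 := by simpa using hwords
    exact S.not_isRedex_contract hxy (hfirst ▸ hlast ▸ hxy)
  · rw [map_mul_map_of, List.append_assoc, List.singleton_append, map_append_contract hker.ge w hxy]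
  · rw [map_mul_map_of, List.append_assoc, List.singleton_append]

end PairRewriting

theorem Mn_indegree_two_iff_intersection_base_general {α M : Type*} [Monoid M]
    (S : PairRewriting α) {π : FreeMonoid α →* M} (hker : Con.ker π = S.con)
    (hsurj : Function.Surjective π) (v : M) :
    (∃ (u₁ u₂ : M) (x₁ x₂ : α),
      (u₁, x₁) ≠ (u₂, x₂) ∧ u₁ * π (of x₁) = v ∧ u₂ * π (of x₂) = v) ↔ S.IsBase π v := by
  refine ⟨?_, PairRewriting.IsBase.exists_ne hker⟩
  rintro ⟨u₁, u₂, x₁, x₂, hne, rfl, h⟩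
  exact PairRewriting.isBase_of_map_mul_eq hker hsurj hne h.symm

section Presentation

variable {n : ℕ}

theorem inP_of_inR {x y : Letter n} (h : inR x y) : inP x := by
  cases x <;> cases y <;> trivial

theorem not_inP_of_inR {x y : Letter n} (h : inR x y) : ¬ inP y := by
  cases x <;> cases y <;> first | exact id | exact h.elim

theorem inP_of_inL {x y : Letter n} (h : inL x y) : inP x := by
  cases x <;> cases y <;> trivial

theorem not_inP_of_inL {x y : Letter n} (h : inL x y) : ¬ inP y := by
  cases x <;> cases y <;> first | exact id | exact h.elim

theorem not_inR_of_inL {x y : Letter n} (h : inL x y) : ¬ inR x y := by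
  cases x <;> cases y <;> first | exact id | exact h.elim

variable [NeZero n]

/-- The word of `L_n` that `ρ_n` relates to a word `x y` of `R_n`; on other pairs the value is
irrelevant. -/
def toLeft : Letter n → Letter n → Letter n × Letter n
  | .d, .b => (.A ⟨n - 1, Nat.sub_one_lt (NeZero.ne n)⟩, .D ⟨n - 1, Nat.sub_one_lt (NeZero.ne n)⟩)
  | .A ⟨0, _⟩, .C _ => (.d, .a)
  | .A ⟨i + 1, h⟩, .C _ => (.A ⟨i, Nat.lt_of_succ_lt h⟩, .D ⟨i, Nat.lt_of_succ_lt h⟩)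
  | .B i, .D _ => if h : i + 1 < n then (.B ⟨i + 1, h⟩, .C ⟨i + 1, h⟩) else (.c, .b)
  | x, y => (x, y)

theorem toLeft_B_of_lt {i : ℕ} (h : i + 1 < n) (j : Fin n) :
    toLeft (.B ⟨i, Nat.lt_of_succ_lt h⟩) (.D j) = (.B ⟨i + 1, h⟩, .C ⟨i + 1, h⟩) :=
  dif_pos h

theorem toLeft_B_of_not_lt {i : Fin n} (h : ¬ i + 1 < n) (j : Fin n) :
    toLeft (.B i) (.D j) = (.c, .b) :=
  dif_neg h

theorem rel_toLeft {x y : Letter n} (h : inR x y) :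
    rel n (of (toLeft x y).1 * of (toLeft x y).2) (of x * of y) := by
  match x, y, h with
  | .d, .b, _ => exact .An (NeZero.pos n)
  | .A ⟨0, hi⟩, .C _, rfl => exact .da hi
  | .A ⟨i + 1, hi⟩, .C _, rfl => exact .AD i hi
  | .B ⟨i, hi⟩, .D _, rfl =>
    by_cases h : i + 1 < n
    · rw [toLeft_B_of_lt h]
      exact .BC i h
    · rw [toLeft_B_of_not_lt h]
      obtain rfl : i = n - 1 := by omega
      exact .cb (NeZero.pos n)

theorem inL_toLeft {x y : Letter n} (h : inR x y) : inL (toLeft x y).1 (toLeft x y).2 := by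
  match x, y, h with
  | .d, .b, _ => exact rfl
  | .A ⟨0, _⟩, .C _, _ => trivial
  | .A ⟨i + 1, _⟩, .C _, _ => exact rfl
  | .B i, .D _, _ =>
    by_cases h : i + 1 < n
    · rw [toLeft_B_of_lt h]
      exact ⟨rfl, Nat.le_add_left 1 i⟩
    · rw [toLeft_B_of_not_lt h]
      trivial

theorem exists_toLeft_eq_of_inL {z t : Letter n} (h : inL z t) :
    ∃ x y, inR x y ∧ toLeft x y = (z, t) := by
  match z, t, h with
  | .c, .b, _ =>
    exact ⟨.B ⟨n - 1, Nat.sub_one_lt (NeZero.ne n)⟩, .D _, rfl,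
      toLeft_B_of_not_lt (by simp [Nat.sub_add_cancel (NeZero.one_le (n := n))]) _⟩
  | .d, .a, _ => exact ⟨.A ⟨0, NeZero.pos n⟩, .C _, rfl, rfl⟩
  | .A ⟨i, hi⟩, .D _, rfl =>
    by_cases h : i + 1 < n
    · exact ⟨.A ⟨i + 1, h⟩, .C _, rfl, rfl⟩
    · obtain rfl : i = n - 1 := by omega
      exact ⟨.d, .b, trivial, rfl⟩
  | .B ⟨i + 1, hi⟩, .C _, ⟨rfl, _⟩ =>
    exact ⟨.B ⟨i, Nat.lt_of_succ_lt hi⟩, .D _, rfl, toLeft_B_of_lt hi _⟩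

variable (n) in
/-- The rewriting system replacing words of `R_n` by words of `L_n`, that is, `ρ_n` read from right
to left. -/
def leftRewriting : PairRewriting (Letter n) where
  IsHead := inP
  IsRedex := inR
  contract := toLeft
  isHead_of_isRedex := inP_of_inR
  not_isHead_of_isRedex := not_inP_of_inR
  isHead_contract_fst h := inP_of_inL (inL_toLeft h)
  not_isHead_contract_snd h := not_inP_of_inL (inL_toLeft h)
  not_isRedex_contract h := not_inR_of_inL (inL_toLeft h)

theorem isContractum_iff_inL {z t : Letter n} :
    (leftRewriting n).IsContractum z t ↔ inL z t := by
  refine ⟨?_, exists_toLeft_eq_of_inL⟩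
  rintro ⟨x, y, hxy, hzt⟩
  obtain ⟨rfl, rfl⟩ := Prod.ext_iff.1 hzt
  exact inL_toLeft hxy

theorem leftRewriting_rule_iff_rel {u w : FreeMonoid (Letter n)} :
    (leftRewriting n).Rule u w ↔ rel n w u := by
  refine ⟨fun ⟨h⟩ => rel_toLeft h, fun h => ?_⟩
  have rule {x y z t : Letter n} (hxy : inR x y) (hzt : toLeft x y = (z, t)) :
      (leftRewriting n).Rule (of x * of y) (of z * of t) := by
    obtain ⟨rfl, rfl⟩ := Prod.ext_iff.1 hzt
    exact .of_isRedex hxy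
  cases h with
  | da h => exact rule (x := .A _) (y := .C _) rfl rfl
  | AD i h => exact rule (x := .A _) (y := .C _) rfl rfl
  | An h => exact rule (x := .d) (y := .b) trivial rfl
  | cb h =>
    exact rule (x := .B _) (y := .D _) rfl
      (toLeft_B_of_not_lt (by simp [Nat.sub_add_cancel h]) _)
  | BC i h => exact rule (x := .B _) (y := .D _) rfl (toLeft_B_of_lt h _)

theorem leftRewriting_con_eq_Mcon : (leftRewriting n).con = Mcon n :=
  le_antisymm
    (Con.conGen_le.2 fun _ _ h => (ConGen.Rel.of _ _ (leftRewriting_rule_iff_rel.1 h)).symm)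
    (Con.conGen_le.2 fun _ _ h => (ConGen.Rel.of _ _ (leftRewriting_rule_iff_rel.2 h)).symm)

theorem ker_mk : Con.ker (mk n) = (leftRewriting n).con :=
  (Con.mk'_ker _).trans leftRewriting_con_eq_Mcon.symm

theorem isBase_iff_isIntersectionBase (v : Mn n) :
    (leftRewriting n).IsBase (mk n) v ↔ IsIntersectionBase v := by
  simp only [PairRewriting.IsBase, isContractum_iff_inL]
  rfl

end Presentation

/-- `v` has in-degree at least `2` in the Cayley graph iff
`v` is an intersection base. -/
theorem Mn_indegree_two_iff_intersection_base (n : ℕ) (hn : 1 ≤ n) (v : Mn n) :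
    (∃ (u₁ u₂ : Mn n) (x₁ x₂ : Letter n),
      (u₁, x₁) ≠ (u₂, x₂) ∧ u₁ * gen x₁ = v ∧ u₂ * gen x₂ = v) ↔
    IsIntersectionBase v := by
  have : NeZero n := NeZero.of_pos hn
  exact (Mn_indegree_two_iff_intersection_base_general
    (leftRewriting n) ker_mk Con.mk'_surjective v).trans (isBase_iff_isIntersectionBase v)

end Malcev
end

section
/- Let n ≥ 1. If v ∈ M_n is an intersection base and u·x = v for some u ∈ M_n and some letter x ∈ X_n, then x ∈ Q_n. -/
namespace Malcev

open FreeMonoid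

/-!
The two sides of each defining relation end in letters of `Q_n`, so whether the last letter of a
word lies in `Q_n` depends only on the element of `M_n` it represents. Every word of `L_n` ends in
a letter of `Q_n`.
-/

/-- The congruence on words that relates two words when their last letters have the same label
under `f`. The last letter is taken in `Option`, so that the empty word forms a class of its own. -/
def lastLetterCon {α β : Type*} (f : α → β) : Con (FreeMonoid α) where
  r s t := s.toList.getLast?.map f = t.toList.getLast?.map f
  iseqv := ⟨fun _ => rfl, Eq.symm, Eq.trans⟩
  mul' hs ht := by
    simp only [toList_mul, List.getLast?_append, Option.map_or, hs, ht]

theorem lastLetterCon_mul_of_iff {α β : Type*} {f : α → β} {s t : FreeMonoid α} {x y : α} :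
    lastLetterCon f (s * of x) (t * of y) ↔ f x = f y := by
  change (s * of x).toList.getLast?.map f = (t * of y).toList.getLast?.map f ↔ _
  simp only [toList_mul, toList_of, List.getLast?_concat, Option.map_some, Option.some_inj]

theorem Mcon_le_lastLetterCon_inQ (n : ℕ) : Mcon n ≤ lastLetterCon inQ := by
  refine Con.conGen_le.mpr fun s t hst => ?_
  cases hst <;> exact lastLetterCon_mul_of_iff.mpr rfl

theorem inQ_of_inL {n : ℕ} {x y : Letter n} (h : inL x y) : inQ y := by
  cases x <;> cases y <;> first | exact h.elim | trivial

theorem word_append_singleton {n : ℕ} (w : List (Letter n)) (x : Letter n) :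
    word (w ++ [x]) = word w * gen x :=
  map_mul (mk n) (ofList w) (of x)

theorem Mn_edge_into_intersection_base_general {n : ℕ} {u v : Mn n} {x y : Letter n}
    (h : u * gen x = v * gen y) : inQ x ↔ inQ y := by
  obtain ⟨s, rfl⟩ := Con.mk'_surjective u
  obtain ⟨t, rfl⟩ := Con.mk'_surjective v
  have hst : Mcon n (s * of x) (t * of y) := (Con.eq _).mp h
  exact (lastLetterCon_mul_of_iff.mp (Mcon_le_lastLetterCon_inQ n hst)).to_iff

/-- any edge into an intersection base is labelled by a letter of `Q_n`. -/
theorem Mn_edge_into_intersection_base (n : ℕ) (hn : 1 ≤ n)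
    (v : Mn n) (hv : IsIntersectionBase v)
    (u : Mn n) (x : Letter n) (h : u * gen x = v) : inQ x := by
  obtain ⟨w, y, z, -, rfl, hyz⟩ := hv
  rw [List.append_cons, word_append_singleton] at h
  exact (Mn_edge_into_intersection_base_general h).mpr (inQ_of_inL hyz)

end Malcev
end

section
/- For every integer n ≥ 2, the monoid M_n is singly aligned: for all p, q ∈ M_n, either pM_n ∩ qM_n = ∅ or there exists r ∈ M_n with pM_n ∩ qM_n = rM_n. -/
/-! Every defining relation of `M_n` exchanges two words of length two. Their first letters never
occur as second letters, so these words do not overlap, and each of them has only one partner. Hence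
two words represent the same element exactly when they differ by simultaneously exchanging disjoint
factors; in particular `M_n` is left cancellative.

If two words with distinct first letters `x` and `z` have a common right multiple, then it begins
with both sides of a relation `x y = z w`, which for `n ≥ 2` is determined by `x` and `z`. So `x y`
is a least common right multiple of `x` and `z`. If only one of the two words is a single letter, it
divides the other; if both are longer, both represent elements of `x y M_n`, and `x y` can be
cancelled. A common first letter can be cancelled as well, so induction on the length applies. -/

namespace Malcev

open FreeMonoid

section CommonMultiples

variable {M : Type*} [Monoid M]

/-- `r` is a least common right multiple of `p` and `q`: the right multiples of `r` are exactly the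
common right multiples of `p` and `q`. In a noncommutative monoid, Mathlib's `p ∣ x` means that
`x = p * m` for some `m`. -/
def IsLCRM (p q r : M) : Prop := ∀ x, r ∣ x ↔ p ∣ x ∧ q ∣ x

theorem IsLCRM.symm {p q r : M} (h : IsLCRM p q r) : IsLCRM q p r :=
  fun x => (h x).trans and_comm

theorem isLCRM_of_dvd {p q : M} (h : p ∣ q) : IsLCRM p q q :=
  fun _ => ⟨fun hq => ⟨h.trans hq, hq⟩, And.right⟩

theorem mul_dvd_mul_iff_left_of_leftCancel [IsLeftCancelMul M] {a p x : M} :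
    a * p ∣ a * x ↔ p ∣ x :=
  ⟨fun ⟨m, hm⟩ => ⟨m, mul_left_cancel (hm.trans (mul_assoc a p m))⟩, mul_dvd_mul_left a⟩

theorem IsLCRM.mul_left [IsLeftCancelMul M] {p q r : M} (h : IsLCRM p q r) (a : M) :
    IsLCRM (a * p) (a * q) (a * r) := by
  intro x
  by_cases hx : a ∣ x
  · obtain ⟨x, rfl⟩ := hx
    simp only [mul_dvd_mul_iff_left_of_leftCancel, h x]
  · have not_mul_dvd (t : M) : ¬ a * t ∣ x := fun ht => hx (dvd_of_mul_right_dvd ht)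
    simp only [not_mul_dvd, and_self]

end CommonMultiples

section SwapSystems

variable {α : Type*} {S : α × α → α × α → Prop}

/-- A swap system on an alphabet: `S (x, y) (z, w)` says that the two-letter words `x y` and `z w`
may be exchanged for one another. -/
structure IsSwapSystem (S : α × α → α × α → Prop) : Prop where
  symm {b c : α × α} : S b c → S c b
  rightUnique : Relator.RightUnique S
  not_overlap {x y z : α} {b c : α × α} : S (x, y) b → ¬ S (y, z) c
  fst_ne {x y z w : α} : S (x, y) (z, w) → x ≠ z
  snd_eq {x y y' z w w' : α} : S (x, y) (z, w) → S (x, y') (z, w') → y = y'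

/-- The relations `x y = z w`, for `S (x, y) (z, w)`, on the free monoid. -/
inductive SwapRel (S : α × α → α × α → Prop) : FreeMonoid α → FreeMonoid α → Prop
  | of_swap {x y z w : α} (s : S (x, y) (z, w)) : SwapRel S (of x * of y) (of z * of w)

/-- The words `u` and `v` differ by simultaneously exchanging disjoint two-letter factors along `S`.
For a swap system this is equality in the monoid presented by `SwapRel S`, see
`IsSwapSystem.ofWord_eq_iff`. -/
inductive SwapEquiv (S : α × α → α × α → Prop) : List α → List α → Prop
  | nil : SwapEquiv S [] []
  | cons (x : α) {u v : List α} (h : SwapEquiv S u v) : SwapEquiv S (x :: u) (x :: v)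
  | swap {x y z w : α} {u v : List α} (s : S (x, y) (z, w)) (h : SwapEquiv S u v) :
      SwapEquiv S (x :: y :: u) (z :: w :: v)

namespace SwapEquiv

variable {u v p q : List α}

theorem refl : ∀ u : List α, SwapEquiv S u u
  | [] => .nil
  | x :: u => .cons x (refl u)

theorem append (h : SwapEquiv S u v) (h' : SwapEquiv S p q) :
    SwapEquiv S (u ++ p) (v ++ q) := by
  induction h with
  | nil => exact h'
  | cons x _ ih => exact .cons x ih
  | swap s _ ih => exact .swap s ih

theorem cons_cons_cases {x z : α} (h : SwapEquiv S (x :: u) (z :: v)) :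
    (x = z ∧ SwapEquiv S u v) ∨
      ∃ y w u' v', u = y :: u' ∧ v = w :: v' ∧ S (x, y) (z, w) ∧ SwapEquiv S u' v' := by
  cases h with
  | cons _ h => exact .inl ⟨rfl, h⟩
  | swap s h => exact .inr ⟨_, _, _, _, rfl, rfl, s, h⟩

end SwapEquiv

/-- The monoid presented by the relations `x y = z w` for `S (x, y) (z, w)`. -/
abbrev SwapMonoid (S : α × α → α × α → Prop) : Type _ := PresentedMonoid (SwapRel S)

namespace SwapMonoid

/-- The element of `SwapMonoid S` represented by a word. -/
def ofWord (S : α × α → α × α → Prop) (u : List α) : SwapMonoid S :=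
  PresentedMonoid.mk (SwapRel S) (ofList u)

theorem ofWord_append (u v : List α) : ofWord S (u ++ v) = ofWord S u * ofWord S v := by
  simp only [ofWord, ofList_append, map_mul]

theorem ofWord_cons (x : α) (u : List α) : ofWord S (x :: u) = ofWord S [x] * ofWord S u :=
  ofWord_append [x] u

theorem ofWord_surjective : Function.Surjective (ofWord S) :=
  PresentedMonoid.surjective_mk

theorem ofWord_dvd_append (u v : List α) : ofWord S u ∣ ofWord S (u ++ v) :=
  ⟨ofWord S v, ofWord_append u v⟩

theorem ofWord_dvd_iff {u : List α} {m : SwapMonoid S} :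
    ofWord S u ∣ m ↔ ∃ v, m = ofWord S (u ++ v) := by
  simp only [Dvd.dvd, ofWord_surjective.exists, ofWord_append]

theorem ofWord_eq_of_swap {x y z w : α} (s : S (x, y) (z, w)) (u : List α) :
    ofWord S (x :: y :: u) = ofWord S (z :: w :: u) := by
  have hs : ofWord S [x, y] = ofWord S [z, w] := PresentedMonoid.mk_eq_mk_of_rel (.of_swap s)
  exact (ofWord_append [x, y] u).trans (hs ▸ (ofWord_append [z, w] u).symm)

theorem ofWord_eq_of_swapEquiv {u v : List α} (h : SwapEquiv S u v) :
    ofWord S u = ofWord S v := by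
  induction h with
  | nil => rfl
  | cons x _ ih => rw [ofWord_cons, ih, ← ofWord_cons]
  | @swap x y z w u v s _ ih =>
    rw [ofWord_eq_of_swap s, ofWord_cons, ofWord_cons w, ih, ← ofWord_cons, ← ofWord_cons]

end SwapMonoid

namespace IsSwapSystem

open SwapMonoid

variable {u v w : List α}

theorem swapEquiv_symm (hS : IsSwapSystem S) (h : SwapEquiv S u v) : SwapEquiv S v u := by
  induction h with
  | nil => exact .nil
  | cons x _ ih => exact .cons x ih
  | swap s _ ih => exact .swap (hS.symm s) ih

theorem eq_cons_of_swapEquiv_cons (hS : IsSwapSystem S) {x y : α} {b : α × α}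
    (s : S (x, y) b) (h : SwapEquiv S u (y :: v)) : ∃ u', u = y :: u' ∧ SwapEquiv S u' v := by
  cases h with
  | cons _ h => exact ⟨_, rfl, h⟩
  | swap t _ => exact absurd (hS.symm t) (hS.not_overlap s)

theorem swapEquiv_trans (hS : IsSwapSystem S) (h : SwapEquiv S u v) (h' : SwapEquiv S v w) :
    SwapEquiv S u w := by
  induction h generalizing w with
  | nil => exact h'
  | cons x _ ih =>
    cases h' with
    | cons _ h' => exact .cons x (ih h')
    | swap s h' =>
      obtain ⟨u, rfl, hu⟩ := hS.eq_cons_of_swapEquiv_cons s (ih (.cons _ h'))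
      exact .swap s hu
  | swap s _ ih =>
    cases h' with
    | cons _ h' =>
      obtain ⟨w, rfl, hw⟩ := hS.eq_cons_of_swapEquiv_cons (hS.symm s) (hS.swapEquiv_symm h')
      exact .swap s (ih (hS.swapEquiv_symm hw))
    | swap t h' =>
      obtain ⟨rfl, rfl⟩ := Prod.ext_iff.1 (hS.rightUnique (hS.symm s) t)
      exact .cons _ (.cons _ (ih h'))

/-- `SwapEquiv S` as a congruence on the free monoid. -/
def con (hS : IsSwapSystem S) : Con (FreeMonoid α) where
  r u v := SwapEquiv S u.toList v.toList
  iseqv := ⟨fun u => .refl u.toList, hS.swapEquiv_symm, hS.swapEquiv_trans⟩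
  mul' := SwapEquiv.append

theorem ofWord_eq_iff (hS : IsSwapSystem S) : ofWord S u = ofWord S v ↔ SwapEquiv S u v := by
  refine ⟨fun h => ?_, ofWord_eq_of_swapEquiv⟩
  have conGen_le_con : conGen (SwapRel S) ≤ hS.con :=
    Con.conGen_le.2 fun _ _ ⟨s⟩ => .swap s .nil
  exact conGen_le_con (PresentedMonoid.mk_eq_mk_iff.1 h)

theorem isLeftCancelMul (hS : IsSwapSystem S) : IsLeftCancelMul (SwapMonoid S) where
  mul_left_cancel a b c h := by
    obtain ⟨p, rfl⟩ := ofWord_surjective a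
    obtain ⟨u, rfl⟩ := ofWord_surjective b
    obtain ⟨v, rfl⟩ := ofWord_surjective c
    simp only [← ofWord_append, hS.ofWord_eq_iff] at h ⊢
    induction p with
    | nil => exact h
    | cons x p ih =>
      rcases h.cons_cons_cases with ⟨-, h⟩ | ⟨_, _, _, _, -, -, s, -⟩
      · exact ih h
      · exact absurd rfl (hS.fst_ne s)

theorem isLCRM_letters (hS : IsSwapSystem S) {x y z w : α} (s : S (x, y) (z, w)) :
    IsLCRM (ofWord S [x]) (ofWord S [z]) (ofWord S [x, y]) := by
  intro m
  refine ⟨fun h => ⟨(ofWord_dvd_append [x] [y]).trans h, ?_⟩, fun ⟨hx, hz⟩ => ?_⟩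
  · rw [ofWord_eq_of_swap s] at h
    exact (ofWord_dvd_append [z] [w]).trans h
  · obtain ⟨u, rfl⟩ := ofWord_dvd_iff.1 hx
    obtain ⟨v, hv⟩ := ofWord_dvd_iff.1 hz
    rcases (hS.ofWord_eq_iff.1 hv).cons_cons_cases with ⟨hxz, -⟩ | ⟨y', _, u', _, rfl, -, s', -⟩
    · exact absurd hxz (hS.fst_ne s)
    · obtain rfl : y = y' := hS.snd_eq s s'
      exact ofWord_dvd_append [x, y] u'

theorem exists_isLCRM_ofWord (hS : IsSwapSystem S) {p q : List α}
    (hpq : SwapEquiv S (p ++ u) (q ++ v)) :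
    ∃ r, IsLCRM (ofWord S p) (ofWord S q) r := by
  have := hS.isLeftCancelMul
  match p, q with
  | [], q => exact ⟨ofWord S q, isLCRM_of_dvd (one_dvd _)⟩
  | p, [] => exact ⟨ofWord S p, (isLCRM_of_dvd (one_dvd _)).symm⟩
  | x :: p, z :: q =>
    rcases SwapEquiv.cons_cons_cases hpq with ⟨rfl, h⟩ | ⟨y, w, u', v', hp, hq, s, h⟩
    · obtain ⟨r, hr⟩ := hS.exists_isLCRM_ofWord h
      rw [ofWord_cons x p, ofWord_cons x q]
      exact ⟨_, hr.mul_left (ofWord S [x])⟩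
    rcases List.append_eq_cons_iff.1 hp with ⟨rfl, -⟩ | ⟨p, rfl, rfl⟩ <;>
      rcases List.append_eq_cons_iff.1 hq with ⟨rfl, -⟩ | ⟨q, rfl, rfl⟩
    · exact ⟨_, hS.isLCRM_letters s⟩
    · rw [← ofWord_eq_of_swap s q]
      exact ⟨_, isLCRM_of_dvd (ofWord_dvd_append [x] (y :: q))⟩
    · rw [ofWord_eq_of_swap s p]
      exact ⟨_, (isLCRM_of_dvd (ofWord_dvd_append [z] (w :: p))).symm⟩
    · obtain ⟨r, hr⟩ := hS.exists_isLCRM_ofWord h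
      rw [← ofWord_eq_of_swap s q]
      exact ⟨_, ofWord_append [x, y] p ▸ ofWord_append [x, y] q ▸ hr.mul_left (ofWord S [x, y])⟩
termination_by p.length

theorem exists_isLCRM (hS : IsSwapSystem S) {p q m : SwapMonoid S} (hp : p ∣ m) (hq : q ∣ m) :
    ∃ r, IsLCRM p q r := by
  obtain ⟨p, rfl⟩ := ofWord_surjective p
  obtain ⟨q, rfl⟩ := ofWord_surjective q
  obtain ⟨u, rfl⟩ := ofWord_dvd_iff.1 hp
  obtain ⟨v, hv⟩ := ofWord_dvd_iff.1 hq
  exact hS.exists_isLCRM_ofWord (hS.ofWord_eq_iff.1 hv)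

end IsSwapSystem

end SwapSystems

section DefiningRelations

variable {n : ℕ}

/-- The defining relations `ρ_n` on pairs of letters: `Step (x, y) (z, w)` if and only if
`(xy, zw) ∈ ρ_n`. Side conditions on the indices replace the index terms of `rel`, so that case
distinctions never have to solve equations in `Fin n`. -/
inductive Step : Letter n × Letter n → Letter n × Letter n → Prop
  | da (i : Fin n) (h : i.val = 0) : Step (.d, .a) (.A i, .C i)
  | AD (i j : Fin n) (h : j.val = i.val + 1) : Step (.A i, .D i) (.A j, .C j)
  | An (i : Fin n) (h : i.val + 1 = n) : Step (.A i, .D i) (.d, .b)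
  | cb (i : Fin n) (h : i.val + 1 = n) : Step (.c, .b) (.B i, .D i)
  | BC (i j : Fin n) (h : j.val = i.val + 1) : Step (.B j, .C j) (.B i, .D i)

theorem rel_of_step {x y z w : Letter n} (h : Step (x, y) (z, w)) :
    rel n (of x * of y) (of z * of w) := by
  cases h with
  | da i h =>
    obtain ⟨_, hi⟩ := i
    subst h
    exact .da hi
  | AD i j h =>
    obtain ⟨_, hj⟩ := j
    subst h
    exact .AD i hj
  | An i h =>
    rw [show i = ⟨n - 1, Nat.sub_lt i.pos Nat.one_pos⟩ from Fin.ext (Nat.eq_sub_of_add_eq h)]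
    exact .An i.pos
  | cb i h =>
    rw [show i = ⟨n - 1, Nat.sub_lt i.pos Nat.one_pos⟩ from Fin.ext (Nat.eq_sub_of_add_eq h)]
    exact .cb i.pos
  | BC i j h =>
    obtain ⟨_, hj⟩ := j
    subst h
    exact .BC i hj

theorem swapRel_step_of_rel {u v : FreeMonoid (Letter n)} (h : rel n u v) : SwapRel Step u v := by
  cases h with
  | da h => exact .of_swap (.da _ rfl)
  | AD i h => exact .of_swap (.AD _ _ rfl)
  | An h => exact .of_swap (.An _ (Nat.sub_add_cancel h))
  | cb h => exact .of_swap (.cb _ (Nat.sub_add_cancel h))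
  | BC i h => exact .of_swap (.BC _ _ rfl)

/-- The symmetric closure of `ρ_n` on pairs of letters. -/
abbrev Swap (n : ℕ) : Letter n × Letter n → Letter n × Letter n → Prop := Relation.SymmGen Step

theorem Mcon_eq_conGen_swapRel (n : ℕ) : Mcon n = conGen (SwapRel (Swap n)) := by
  refine le_antisymm (Con.conGen_le.2 fun u v h => ?_) (Con.conGen_le.2 fun u v ⟨s⟩ => ?_)
  · obtain ⟨s⟩ := swapRel_step_of_rel h
    exact .of _ _ (.of_swap (.of_rel s))
  · rcases s with s | s
    · exact .of _ _ (rel_of_step s)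
    · exact .symm (.of _ _ (rel_of_step s))

theorem Swap.inP_fst {x y : Letter n} {b : Letter n × Letter n} (s : Swap n (x, y) b) : inP x := by
  rcases s with s | s <;> cases s <;> trivial

theorem Swap.inQ_snd {x y : Letter n} {b : Letter n × Letter n} (s : Swap n (x, y) b) : inQ y := by
  rcases s with s | s <;> cases s <;> trivial

theorem not_inP_of_inQ {x : Letter n} (h : inQ x) : ¬ inP x := by
  cases x <;> simp_all only [inP, inQ, not_false_eq_true]

theorem isSwapSystem_swap (hn : 2 ≤ n) : IsSwapSystem (Swap n) where
  symm := .symm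
  rightUnique a b c s t := by
    rcases s with s | s <;> cases s <;> rcases t with t | t <;> cases t <;> grind
  not_overlap s t := not_inP_of_inQ s.inQ_snd t.inP_fst
  fst_ne s := by
    rcases s with s | s <;> cases s <;> grind
  snd_eq s t := by
    rcases s with s | s <;> cases s <;> rcases t with t | t <;> cases t <;> grind

theorem exists_isLCRM (hn : 2 ≤ n) {p q m : Mn n} (hp : p ∣ m) (hq : q ∣ m) :
    ∃ r, IsLCRM p q r := by
  have in_swapMonoid {p q m : (conGen (SwapRel (Swap n))).Quotient} :
      p ∣ m → q ∣ m → ∃ r, IsLCRM p q r := (isSwapSystem_swap hn).exists_isLCRM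
  rw [← Mcon_eq_conGen_swapRel] at in_swapMonoid
  exact in_swapMonoid hp hq

end DefiningRelations

/-- for `n ≥ 2`, the monoid `M_n` is singly aligned. -/
theorem Mn_singly_aligned (n : ℕ) (hn : 2 ≤ n) (p q : Mn n) :
    rIdeal p ∩ rIdeal q = ∅ ∨ ∃ r : Mn n, rIdeal p ∩ rIdeal q = rIdeal r := by
  rcases (rIdeal p ∩ rIdeal q).eq_empty_or_nonempty with h | ⟨m, hp, hq⟩
  · exact .inl h
  · obtain ⟨r, hr⟩ := exists_isLCRM hn hp hq
    exact .inr ⟨r, Set.ext fun x => (hr x).symm⟩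

end Malcev
end
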